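/- Let v be a TU-game on N = {1,…,n}, let γ_S > 0 be weights for all nonempty proper subsets S of N, let v* be a closest balanced game to v, and let x ∈ C(v*). Then v*(S) = min{x(S), v(S)} for every nonempty proper subset S of N, and v*(N) = v(N). -/

import Mathlib

open Finset

/-- Sum of an allocation `x` over a coalition `S`: `x(S) = ∑_{i ∈ S} x_i`. -/
def coalSum {n : ℕ} (x : Fin n → ℝ) (S : Finset (Fin n)) : ℝ := ∑ i ∈ S, x i

/-- `x` belongs to the core of the TU-game `v`. -/
def inCore {n : ℕ} (v : Finset (Fin n) → ℝ) (x : Fin n → ℝ) : Prop :=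
  coalSum x Finset.univ = v Finset.univ ∧ ∀ S : Finset (Fin n), v S ≤ coalSum x S

/-- A game is balanced iff its core is nonempty. -/
def IsBalancedGame {n : ℕ} (v : Finset (Fin n) → ℝ) : Prop := ∃ x, inCore v x

/-- The nonempty proper subsets of `N = {1,…,n}`. -/
def propSubsets (n : ℕ) : Finset (Finset (Fin n)) :=
  Finset.univ.filter (fun S => S ≠ ∅ ∧ S ≠ Finset.univ)

/-- Weighted squared distance `∑_{∅≠S⊊N} γ_S (v(S) − w(S))²` between games. -/
def dist2 {n : ℕ} (γ v w : Finset (Fin n) → ℝ) : ℝ :=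
  ∑ S ∈ propSubsets n, γ S * (v S - w S) ^ 2

/-- `w` is a closest balanced game to `v` with respect to the weights `γ`:
`w` is a balanced game with `w(N) = v(N)` minimizing the weighted squared distance
to `v` among all balanced games `u` with `u(N) = v(N)`. -/
def IsClosestBalanced {n : ℕ} (γ v w : Finset (Fin n) → ℝ) : Prop :=
  w ∅ = 0 ∧ IsBalancedGame w ∧ w Finset.univ = v Finset.univ ∧
    ∀ u : Finset (Fin n) → ℝ, u ∅ = 0 → IsBalancedGame u →
      u Finset.univ = v Finset.univ → dist2 γ v w ≤ dist2 γ v u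

/-!
If `x` lies in the core of `v*`, then the worth of a single proper coalition `S` can be replaced by
any `t ≤ x(S)` without `x` leaving the core. Such a replacement changes only the summand of `S` in
the distance to `v`, so optimality makes `v*(S)` the point of `(-∞, x(S)]` nearest to `v(S)`, which
is `min {x(S), v(S)}`.
-/

theorem eq_min_of_sub_sq_le {R : Type*} [CommRing R] [LinearOrder R] [IsStrictOrderedRing R]
    {a b c : R} (hab : a ≤ b) (h : (c - a) ^ 2 ≤ (c - min b c) ^ 2) : a = min b c := by
  rcases le_total b c with hbc | hcb
  · rw [min_eq_left hbc] at h ⊢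
    have hsub : c - a ≤ c - b := le_of_sq_le_sq h (sub_nonneg.mpr hbc)
    exact hab.antisymm ((sub_le_sub_iff_left c).mp hsub)
  · rw [min_eq_right hcb] at h ⊢
    have hzero : (c - a) ^ 2 = 0 := le_antisymm (by simpa using h) (sq_nonneg _)
    exact (sub_eq_zero.mp (pow_eq_zero_iff two_ne_zero |>.mp hzero)).symm

section

variable {n : ℕ} {γ v w : Finset (Fin n) → ℝ} {x : Fin n → ℝ} {S : Finset (Fin n)} {t : ℝ}

theorem mem_propSubsets : S ∈ propSubsets n ↔ S ≠ ∅ ∧ S ≠ univ := by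
  simp [propSubsets]

theorem inCore.update (hx : inCore w x) (hS : S ≠ univ) (ht : t ≤ coalSum x S) :
    inCore (Function.update w S t) x := by
  refine ⟨by rw [Function.update_of_ne hS.symm, hx.1], fun T ↦ ?_⟩
  rcases eq_or_ne T S with rfl | hT
  · rwa [Function.update_self]
  · rw [Function.update_of_ne hT]
    exact hx.2 T

theorem dist2_update_add (hS : S ∈ propSubsets n) :
    dist2 γ v (Function.update w S t) + γ S * (v S - w S) ^ 2 =
      dist2 γ v w + γ S * (v S - t) ^ 2 := by
  have off_S : ∑ T ∈ (propSubsets n).erase S, γ T * (v T - Function.update w S t T) ^ 2 =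
      ∑ T ∈ (propSubsets n).erase S, γ T * (v T - w T) ^ 2 :=
    sum_congr rfl fun T hT ↦ by rw [Function.update_of_ne (ne_of_mem_erase hT)]
  rw [dist2, dist2, ← add_sum_erase _ _ hS, ← add_sum_erase _ _ hS, off_S, Function.update_self]
  ring

theorem IsClosestBalanced.sub_sq_le (hw : IsClosestBalanced γ v w) (hx : inCore w x)
    (hS : S ∈ propSubsets n) (hγS : 0 < γ S) (ht : t ≤ coalSum x S) :
    (v S - w S) ^ 2 ≤ (v S - t) ^ 2 := by
  obtain ⟨hw_empty, -, hw_univ, hmin⟩ := hw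
  obtain ⟨hS_empty, hS_univ⟩ := mem_propSubsets.mp hS
  have hdist : dist2 γ v w ≤ dist2 γ v (Function.update w S t) :=
    hmin _ (by rwa [Function.update_of_ne hS_empty.symm]) ⟨x, hx.update hS_univ ht⟩
      (by rwa [Function.update_of_ne hS_univ.symm])
  have hexchange := dist2_update_add (γ := γ) (v := v) (w := w) (t := t) hS
  exact le_of_mul_le_mul_left (by linarith) hγS

theorem closest_balanced_eq_min_general (hw : IsClosestBalanced γ v w) (hx : inCore w x) :
    (∀ S ∈ propSubsets n, 0 < γ S → w S = min (coalSum x S) (v S)) ∧ w univ = v univ :=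
  ⟨fun S hS hγS ↦ eq_min_of_sub_sq_le (hx.2 S) (hw.sub_sq_le hx hS hγS (min_le_left _ _)),
    hw.2.2.1⟩

end

/-- Corollary (Corollary `corclosest`): for any `x ∈ C(v*)`,
`v*(S) = min{x(S), v(S)}` for every nonempty proper subset `S`, and `v*(N) = v(N)`. -/
theorem closest_balanced_eq_min (n : ℕ) (v vstar γ : Finset (Fin n) → ℝ)
    (hv0 : v ∅ = 0)
    (hγ : ∀ S ∈ propSubsets n, 0 < γ S)
    (hclosest : IsClosestBalanced γ v vstar)
    (x : Fin n → ℝ) (hx : inCore vstar x) :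
    (∀ S ∈ propSubsets n, vstar S = min (coalSum x S) (v S)) ∧
      vstar Finset.univ = v Finset.univ :=
  (closest_balanced_eq_min_general hclosest hx).imp_left fun h S hS ↦ h S hS (hγ S hS)
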